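/- arXiv:1105.0443 — 4 statements merged into one kernel-verified Lean document; each statement's English description precedes it below -/
import Mathlib

section
/- Each of the matrices $M_1, M_2, M_3, M_4$ satisfies the Hecke quadratic relation $(M_i - r\,I)(M_i + r^{-1} I) = 0$, and they satisfy the braid/commutation relations of the Coxeter diagram of type $D_4$: $M_1 M_3 M_1 = M_3 M_1 M_3$, $M_2 M_3 M_2 = M_3 M_2 M_3$, $M_3 M_4 M_3 = M_4 M_3 M_4$, $M_1 M_2 = M_2 M_1$, $M_1 M_4 = M_4 M_1$, and $M_2 M_4 = M_4 M_2$. In particular, $g_i \mapsto M_i$ defines a $3$-dimensional matrix representation of the Iwahori–Hecke algebra of type $D_4$ with parameter $r^2$. -/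
open Matrix

/-- The matrices `M₁, M₂, M₃, M₄` (the left actions of the Hecke generators on the
invariant subspace `𝒰` of the Cohen–Wales space `V₄`) satisfy the quadratic Hecke
relation `(Mᵢ - r·I)(Mᵢ + r⁻¹·I) = 0` and the braid/commutation relations of the
Coxeter diagram of type `D₄` (node 3 adjacent to nodes 1, 2, 4), hence define a
3-dimensional matrix representation of the Iwahori–Hecke algebra of type `D₄`
with parameter `r²`. -/
theorem heckeD4_relations_M (r : ℂ) (hr : r ≠ 0) (m : ℂ) (hm : m = r⁻¹ - r)
    (M1 M2 M3 M4 : Matrix (Fin 3) (Fin 3) ℂ)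
    (hM1 : M1 = !![-m, -1, m / r; -1, 0, m; 0, 0, r])
    (hM2 : M2 = !![0, 1, 0; 1, -m, 0; 0, 0, r])
    (hM3 : M3 = !![0, m * r, 1; 0, r, 0; 1, -m, -m])
    (hM4 : M4 = !![0, 1, 0; 1, -m, 0; 0, 0, r]) :
    ((M1 - r • (1 : Matrix (Fin 3) (Fin 3) ℂ)) * (M1 + r⁻¹ • 1) = 0 ∧
     (M2 - r • (1 : Matrix (Fin 3) (Fin 3) ℂ)) * (M2 + r⁻¹ • 1) = 0 ∧
     (M3 - r • (1 : Matrix (Fin 3) (Fin 3) ℂ)) * (M3 + r⁻¹ • 1) = 0 ∧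
     (M4 - r • (1 : Matrix (Fin 3) (Fin 3) ℂ)) * (M4 + r⁻¹ • 1) = 0) ∧
    (M1 * M3 * M1 = M3 * M1 * M3 ∧
     M2 * M3 * M2 = M3 * M2 * M3 ∧
     M3 * M4 * M3 = M4 * M3 * M4 ∧
     M1 * M2 = M2 * M1 ∧
     M1 * M4 = M4 * M1 ∧
     M2 * M4 = M4 * M2) := by
  subst hM1 hM2 hM3 hM4 hm
  refine ⟨⟨?_, ?_, ?_, ?_⟩, ?_, ?_, ?_, ?_, ?_, ?_⟩ <;>
  -- Entrywise, each relation is an identity of Laurent polynomials in `r`.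
  · ext i j
    fin_cases i <;> fin_cases j <;>
      simp [Matrix.mul_apply, Fin.sum_univ_three, Matrix.one_apply] <;>
      grind
end

section
/- Each of the matrices $N_1, N_2, N_3, N_4$ satisfies the Hecke quadratic relation $(N_i - r\,I)(N_i + r^{-1} I) = 0$, and they satisfy the braid/commutation relations of the Coxeter diagram of type $D_4$: $N_1 N_3 N_1 = N_3 N_1 N_3$, $N_2 N_3 N_2 = N_3 N_2 N_3$, $N_3 N_4 N_3 = N_4 N_3 N_4$, $N_1 N_2 = N_2 N_1$, $N_1 N_4 = N_4 N_1$, and $N_2 N_4 = N_4 N_2$. In particular, $g_i \mapsto N_i$ defines a $3$-dimensional matrix representation of the Iwahori–Hecke algebra of type $D_4$ with parameter $r^2$. -/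
open Matrix

/-- The matrices `N₁, N₂, N₃, N₄` (the left actions of the Hecke generators on the
invariant subspace `𝒲` of the Cohen–Wales space `V₄`) satisfy the quadratic Hecke
relation `(Nᵢ - r·I)(Nᵢ + r⁻¹·I) = 0` and the braid/commutation relations of the
Coxeter diagram of type `D₄` (node 3 adjacent to nodes 1, 2, 4), hence define a
3-dimensional matrix representation of the Iwahori–Hecke algebra of type `D₄`
with parameter `r²`. -/
theorem heckeD4_relations_N (r : ℂ) (hr : r ≠ 0) (m : ℂ) (hm : m = r⁻¹ - r)
    (N1 N2 N3 N4 : Matrix (Fin 3) (Fin 3) ℂ)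
    (hN1 : N1 = !![0, m * r, -1; 0, r, 0; -1, m, -m])
    (hN2 : N2 = !![-m, 0, 1; 0, r, 0; 1, 0, 0])
    (hN3 : N3 = !![0, 1, 0; 1, -m, 0; 0, 0, r])
    (hN4 : N4 = !![0, m * r, -1; 0, r, 0; -1, m, -m]) :
    ((N1 - r • (1 : Matrix (Fin 3) (Fin 3) ℂ)) * (N1 + r⁻¹ • 1) = 0 ∧
     (N2 - r • (1 : Matrix (Fin 3) (Fin 3) ℂ)) * (N2 + r⁻¹ • 1) = 0 ∧
     (N3 - r • (1 : Matrix (Fin 3) (Fin 3) ℂ)) * (N3 + r⁻¹ • 1) = 0 ∧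
     (N4 - r • (1 : Matrix (Fin 3) (Fin 3) ℂ)) * (N4 + r⁻¹ • 1) = 0) ∧
    (N1 * N3 * N1 = N3 * N1 * N3 ∧
     N2 * N3 * N2 = N3 * N2 * N3 ∧
     N3 * N4 * N3 = N4 * N3 * N4 ∧
     N1 * N2 = N2 * N1 ∧
     N1 * N4 = N4 * N1 ∧
     N2 * N4 = N4 * N2) := by
  -- With `s = r⁻¹` every matrix entry is a polynomial in `r, s`, and each entrywise identity
  -- holds modulo the relation `r * s = 1`.
  have hs : r * r⁻¹ = 1 := mul_inv_cancel₀ hr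
  generalize r⁻¹ = s at *
  subst hm hN1 hN2 hN3 hN4
  refine ⟨⟨?_, ?_, ?_, ?_⟩, ?_, ?_, ?_, ?_, rfl, ?_⟩ <;>
  · ext i j
    fin_cases i <;> fin_cases j <;>
      simp [Matrix.mul_apply, Fin.sum_univ_three] <;> grind
end

section
/- Assume $r^{2k} \notin \{1, -1\}$ for $k = 1, 2, 3$ and $r^8 \neq 1$. Then the matrices $M_1, M_2, M_3, M_4$ act irreducibly on $\mathbb{C}^3$: the only subspaces $W \subseteq \mathbb{C}^3$ satisfying $M_i W \subseteq W$ for all $i \in \{1,2,3,4\}$ are $W = \{0\}$ and $W = \mathbb{C}^3$. -/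
/-!
Each `M_i - r` has rank one, `M_i v = r v + φ_i(v) u_i`, with

* `u₁ = (1/r, 1, 0)`,  `φ₁ = (-1, -r, m)`,
* `u₂ = (-r, 1, 0)`,   `φ₂ = (1, -1/r, 0)`,
* `u₃ = (-r, 0, 1)`,   `φ₃ = (1, -m, -1/r)`.

So an invariant subspace `W` containing a vector `v` with `φ_i(v) ≠ 0` contains `u_i`
(`mem_of_rank_one`). The determinant of `(φ₁, φ₂, φ₃)` is `-(r² + r⁻²)`, which is nonzero because
`r⁴ ≠ -1`; hence a nonzero `W` contains some `u_i`. The numbers `φ₁(u₃)`, `φ₃(u₁)`, `φ₂(u₃)`,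
`φ₃(u₂)` are `±r^{±1}`, so `W` contains all three `u_i`. Finally `det (u₁, u₂, u₃) = r + r⁻¹`,
nonzero because `r² ≠ -1`, so `W` is everything. As `M₄ = M₂`, only three matrices matter.
-/

/-- A subspace containing `v` and `r v + c u`, with `c ≠ 0`, contains `u`. -/
lemma mem_of_rank_one (W : Submodule ℂ (Fin 3 → ℂ)) {r c : ℂ} {v w u : Fin 3 → ℂ}
    (hv : v ∈ W) (hw : w ∈ W) (h : w = r • v + c • u) (hc : c ≠ 0) : u ∈ W := by
  have h1 : c • u ∈ W := by
    have := W.sub_mem hw (W.smul_mem r hv)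
    rwa [h, add_sub_cancel_left] at this
  exact (W.smul_mem_iff hc).1 h1

open Matrix

/-- Under the semisimplicity assumptions `r^(2k) ∉ {1, -1}` for `k = 1, 2, 3` and
`r⁸ ≠ 1`, the matrices `M₁, M₂, M₃, M₄` act irreducibly on `ℂ³`: the only subspaces
invariant under all four matrices are `{0}` and `ℂ³`. -/
theorem M_irreducible (r : ℂ) (hr : r ≠ 0) (m : ℂ) (hm : m = r⁻¹ - r)
    (hsemi : ∀ k : ℕ, 1 ≤ k → k ≤ 3 → r ^ (2 * k) ≠ 1 ∧ r ^ (2 * k) ≠ -1)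
    (h8 : r ^ 8 ≠ 1)
    (M1 M2 M3 M4 : Matrix (Fin 3) (Fin 3) ℂ)
    (hM1 : M1 = !![-m, -1, m / r; -1, 0, m; 0, 0, r])
    (hM2 : M2 = !![0, 1, 0; 1, -m, 0; 0, 0, r])
    (hM3 : M3 = !![0, m * r, 1; 0, r, 0; 1, -m, -m])
    (hM4 : M4 = !![0, 1, 0; 1, -m, 0; 0, 0, r]) :
    ∀ W : Submodule ℂ (Fin 3 → ℂ),
      (∀ M ∈ ({M1, M2, M3, M4} : Set (Matrix (Fin 3) (Fin 3) ℂ)),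
        ∀ v ∈ W, M.mulVec v ∈ W) →
      W = ⊥ ∨ W = ⊤ := by
  intro W hW
  have hr2 : r ^ 2 + 1 ≠ 0 := fun h =>
    (hsemi 1 le_rfl (by norm_num)).2 (by linear_combination h)
  have hr4 : r ^ 4 + 1 ≠ 0 := fun h =>
    (hsemi 2 (by norm_num) (by norm_num)).2 (by linear_combination h)
  have key1 : ∀ v ∈ W, -v 0 - r * v 1 + m * v 2 ≠ 0 → ![r⁻¹, 1, 0] ∈ W := by
    intro v hv hc
    refine mem_of_rank_one W (r := r) hv (hW M1 (by simp) v hv) ?_ hc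
    ext i
    fin_cases i <;> simp [hM1, hm, Matrix.mulVec, dotProduct, Fin.sum_univ_three] <;>
      field_simp <;> ring
  have key2 : ∀ v ∈ W, v 0 - r⁻¹ * v 1 ≠ 0 → ![-r, 1, 0] ∈ W := by
    intro v hv hc
    refine mem_of_rank_one W (r := r) hv (hW M2 (by simp) v hv) ?_ hc
    ext i
    fin_cases i <;> simp [hM2, hm, Matrix.mulVec, dotProduct, Fin.sum_univ_three] <;>
      field_simp <;> ring
  have key3 : ∀ v ∈ W, v 0 - m * v 1 - r⁻¹ * v 2 ≠ 0 → ![-r, 0, 1] ∈ W := by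
    intro v hv hc
    refine mem_of_rank_one W (r := r) hv (hW M3 (by simp) v hv) ?_ hc
    ext i
    fin_cases i <;> simp [hM3, hm, Matrix.mulVec, dotProduct, Fin.sum_univ_three] <;>
      field_simp <;> ring
  have h13 : ![r⁻¹, 1, 0] ∈ W → ![-r, 0, 1] ∈ W := fun h =>
    key3 _ h (by simp [hm, hr])
  have h23 : ![-r, 1, 0] ∈ W → ![-r, 0, 1] ∈ W := fun h =>
    key3 _ h (by
      simp only [hm, Matrix.cons_val]
      intro h0
      exact inv_ne_zero hr (by linear_combination -h0))
  have h31 : ![-r, 0, 1] ∈ W → ![r⁻¹, 1, 0] ∈ W := fun h =>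
    key1 _ h (by simp [hm, hr])
  have h32 : ![-r, 0, 1] ∈ W → ![-r, 1, 0] ∈ W := fun h =>
    key2 _ h (by simp [hr])
  by_cases h3 : ![-r, 0, 1] ∈ W
  · right
    have h1 := h31 h3
    have h2 := h32 h3
    have hs : r⁻¹ + r ≠ 0 := by
      intro h
      apply hr2
      field_simp at h
      linear_combination h
    rw [eq_top_iff]
    intro v _
    -- Cramer's rule in the basis `u₁, u₂, u₃`: the coefficient `a` of `u₁` satisfies
    -- `(r⁻¹ + r) a = v₀ + r v₁ + r v₂`.
    obtain ⟨a, ha⟩ : ∃ a, (r⁻¹ + r) * a = v 0 + r * v 1 + r * v 2 :=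
      ⟨(v 0 + r * v 1 + r * v 2) / (r⁻¹ + r), mul_div_cancel₀ _ hs⟩
    have hv : v = a • ![r⁻¹, 1, 0] + (v 1 - a) • ![-r, 1, 0] + v 2 • ![-r, 0, 1] := by
      ext i
      fin_cases i
      · simp
        linear_combination -ha
      · simp
      · simp
    rw [hv]
    exact W.add_mem (W.add_mem (W.smul_mem _ h1) (W.smul_mem _ h2)) (W.smul_mem _ h3)
  · left
    rw [Submodule.eq_bot_iff]
    intro v hv
    have e1 : -v 0 - r * v 1 + m * v 2 = 0 := by
      by_contra h
      exact h3 (h13 (key1 v hv h))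
    have e2 : v 0 - r⁻¹ * v 1 = 0 := by
      by_contra h
      exact h3 (h23 (key2 v hv h))
    have e3 : v 0 - m * v 1 - r⁻¹ * v 2 = 0 := by
      by_contra h
      exact h3 (key3 v hv h)
    have hi : r * r⁻¹ = 1 := mul_inv_cancel₀ hr
    have f1 : v 1 = r * v 0 := by linear_combination (-r) * e2 - v 1 * hi
    have f2 : v 2 = r ^ 3 * v 0 := by
      rw [f1, hm] at e3
      linear_combination (-r) * e3 - (v 2 + r * v 0) * hi
    have f0 : v 0 = 0 := by
      rw [f1, f2, hm] at e1
      have : (r ^ 4 + 1) * v 0 = 0 := by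
        linear_combination -e1 + r ^ 2 * v 0 * hi
      exact (mul_eq_zero.1 this).resolve_left hr4
    ext i
    fin_cases i <;> simp [f1, f2, f0]
end

section
/- Assume $r^{2k} \notin \{1, -1\}$ for $k = 1, 2, 3$ and $r^8 \neq 1$. Then the matrices $N_1, N_2, N_3, N_4$ act irreducibly on $\mathbb{C}^3$: the only subspaces $W \subseteq \mathbb{C}^3$ satisfying $N_i W \subseteq W$ for all $i \in \{1,2,3,4\}$ are $W = \{0\}$ and $W = \mathbb{C}^3$. -/
/-!
Each `Nᵢ - r` has rank one: `(Nᵢ - r) v = fᵢ(v) • aᵢ` with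

* `a₁ = (-r, 0, -1)`, `f₁ = (1, -m, r⁻¹)`,
* `a₂ = (-r⁻¹, 0, 1)`, `f₂ = (1, 0, -r)`,
* `a₃ = (-r, 1, 0)`, `f₃ = (1, -r⁻¹, 0)`.

Hence an invariant subspace `W` contains `fᵢ(v) • aᵢ` for all `v ∈ W`. The functionals `fᵢ` have
determinant `-(r² + r⁻²)`, which is nonzero since `r⁴ ≠ -1`, so a nonzero `v ∈ W` puts some `aᵢ`
in `W`. As `f₃(a₁), f₃(a₂), f₁(a₃), f₂(a₃)` are all nonzero, `W` then contains `a₁, a₂, a₃`,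
and these span `ℂ³` because `r² ≠ -1`.
-/

open Matrix

/-- Under the semisimplicity assumptions `r^(2k) ∉ {1, -1}` for `k = 1, 2, 3` and
`r⁸ ≠ 1`, the matrices `N₁, N₂, N₃, N₄` act irreducibly on `ℂ³`: the only subspaces
invariant under all four matrices are `{0}` and `ℂ³`. -/
theorem N_irreducible (r : ℂ) (hr : r ≠ 0) (m : ℂ) (hm : m = r⁻¹ - r)
    (hsemi : ∀ k : ℕ, 1 ≤ k → k ≤ 3 → r ^ (2 * k) ≠ 1 ∧ r ^ (2 * k) ≠ -1)
    (h8 : r ^ 8 ≠ 1)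
    (N1 N2 N3 N4 : Matrix (Fin 3) (Fin 3) ℂ)
    (hN1 : N1 = !![0, m * r, -1; 0, r, 0; -1, m, -m])
    (hN2 : N2 = !![-m, 0, 1; 0, r, 0; 1, 0, 0])
    (hN3 : N3 = !![0, 1, 0; 1, -m, 0; 0, 0, r])
    (hN4 : N4 = !![0, m * r, -1; 0, r, 0; -1, m, -m]) :
    ∀ W : Submodule ℂ (Fin 3 → ℂ),
      (∀ N ∈ ({N1, N2, N3, N4} : Set (Matrix (Fin 3) (Fin 3) ℂ)),
        ∀ v ∈ W, N.mulVec v ∈ W) →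
      W = ⊥ ∨ W = ⊤ := by
  intro W hW
  have h2 : r ^ 2 ≠ -1 := by simpa using (hsemi 1 le_rfl (by norm_num)).2
  have h4 : r ^ 4 ≠ -1 := by simpa using (hsemi 2 (by norm_num) (by norm_num)).2
  -- The vectors `fᵢ(v) • aᵢ = Nᵢ v - r v` lie in `W`; divide when `fᵢ(v) ≠ 0`.
  have key1 : ∀ v ∈ W, v 0 - m * v 1 + r⁻¹ * v 2 ≠ 0 → ![-r, 0, -1] ∈ W := by
    intro v hv h
    refine (W.smul_mem_iff h).1 ?_
    convert W.sub_mem (hW N1 (by simp) v hv) (W.smul_mem r hv) using 1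
    subst hN1 hm
    ext i
    fin_cases i <;> simp [dotProduct, Fin.sum_univ_three] <;> field_simp <;> ring
  have key2 : ∀ v ∈ W, v 0 - r * v 2 ≠ 0 → ![-r⁻¹, 0, 1] ∈ W := by
    intro v hv h
    refine (W.smul_mem_iff h).1 ?_
    convert W.sub_mem (hW N2 (by simp) v hv) (W.smul_mem r hv) using 1
    subst hN2 hm
    ext i
    fin_cases i <;> simp [dotProduct, Fin.sum_univ_three] <;> field_simp <;> ring
  have key3 : ∀ v ∈ W, v 0 - r⁻¹ * v 1 ≠ 0 → ![-r, 1, 0] ∈ W := by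
    intro v hv h
    refine (W.smul_mem_iff h).1 ?_
    convert W.sub_mem (hW N3 (by simp) v hv) (W.smul_mem r hv) using 1
    subst hN3 hm
    ext i
    fin_cases i <;> simp [dotProduct, Fin.sum_univ_three] <;> field_simp <;> ring
  by_cases hbot : W = ⊥
  · exact Or.inl hbot
  right
  obtain ⟨v, hv, hv0⟩ := W.ne_bot_iff.1 hbot
  have a3 : ![-r, 1, 0] ∈ W := by
    by_cases c3 : v 0 - r⁻¹ * v 1 = 0
    · by_cases c2 : v 0 - r * v 2 = 0
      · by_cases c1 : v 0 - m * v 1 + r⁻¹ * v 2 = 0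
        · -- All three functionals vanish at `v`, which forces `v = 0`.
          exfalso
          apply hv0
          have e0 : v 0 = r * v 2 := sub_eq_zero.1 c2
          have e1 : v 1 = r ^ 2 * v 2 := by
            field_simp at c3
            linear_combination -c3 + r * e0
          have e2 : v 2 = 0 := by
            have h : (r ^ 4 + 1) * v 2 = 0 := by
              rw [e0, e1, hm] at c1
              field_simp at c1
              linear_combination c1
            exact (mul_eq_zero.1 h).resolve_left fun h => h4 (eq_neg_of_add_eq_zero_left h)
          ext i
          fin_cases i <;> simp [e0, e1, e2]
        · exact key3 _ (key1 v hv c1) (by simpa using hr)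
      · exact key3 _ (key2 v hv c2) (by simpa using hr)
    · exact key3 v hv c3
  have a1 : ![-r, 0, -1] ∈ W := key1 _ a3 (by
    have : (-r : ℂ) - m = -r⁻¹ := by rw [hm]; ring
    simpa [this] using hr)
  have a2 : ![-r⁻¹, 0, 1] ∈ W := key2 _ a3 (by simpa using hr)
  have hd : r ^ 2 + 1 ≠ 0 := fun h => h2 (eq_neg_of_add_eq_zero_left h)
  rw [eq_top_iff]
  intro w _
  -- The coefficients of `w` in the basis `a₁, a₂, a₃`, from Cramer's rule.
  have hw : w = (-(r * (w 0 + r * w 1) + w 2) / (r ^ 2 + 1)) • ![-r, 0, -1]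
      + ((r ^ 2 * w 2 - r * (w 0 + r * w 1)) / (r ^ 2 + 1)) • ![-r⁻¹, 0, 1]
      + w 1 • ![-r, 1, 0] := by
    ext i
    fin_cases i <;> simp <;> field_simp <;> ring
  rw [hw]
  exact W.add_mem (W.add_mem (W.smul_mem _ a1) (W.smul_mem _ a2)) (W.smul_mem _ a3)
end
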